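/- Pathwise estimate for the stochastic exponential: let x ∈ ℝ, c ≥ 0, and let (d_i)_{i∈ℕ} be a sequence of real numbers with |d_i| ≤ 1/16 for every i and Σ_{i} d_i² < ∞. Then the infinite product Π_i (1 + d_i)·e^{−d_i} converges to a limit in (0, 1], and setting E := e^{x − c/2} · Π_i (1 + d_i)·e^{−d_i} and Q := c + Σ_i d_i², one has |1 − E| ≤ (|x| + Q) · exp(|x| + Q). -/

import Mathlib

/-!
Write `aᵢ = (1 + dᵢ) e^{-dᵢ}`. From `1 + t ≤ eᵗ` at `t = dᵢ` and `t = -dᵢ` one gets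
`1 - dᵢ² ≤ aᵢ ≤ 1` as soon as `dᵢ ≥ -1`, so `∏ aᵢ` converges together with `∑ dᵢ²`, and the
Weierstrass product inequality gives `1 - ∑ dᵢ² ≤ ∏ aᵢ ≤ 1`. This replaces the bound
`aᵢ ≥ exp (-dᵢ²)`, which fails for `dᵢ` close to `-1`. With `p = ∏ aᵢ` and
`A = |x| + c + ∑ dᵢ²`, the product `exp (x - c/2) * p` then lies between `1 - A` and `exp A`, and
`exp A - 1 ≤ A * exp A`.
-/

section WeierstrassProduct

variable {ι R : Type*} [CommRing R] [PartialOrder R] [IsOrderedRing R] {a f : ι → R}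

lemma one_sub_sum_le_prod (s : Finset ι) (hf₀ : ∀ i ∈ s, 0 ≤ f i) (hf₁ : ∀ i ∈ s, f i ≤ 1)
    (haf : ∀ i ∈ s, 1 - a i ≤ f i) : 1 - ∑ i ∈ s, a i ≤ ∏ i ∈ s, f i := by
  induction s using Finset.cons_induction with
  | empty => simp
  | cons j s hj ih =>
    rw [Finset.forall_mem_cons] at hf₀ hf₁ haf
    rw [Finset.sum_cons, Finset.prod_cons]
    have hprod : ∏ i ∈ s, f i ≤ 1 := Finset.prod_le_one hf₀.2 hf₁.2
    have hcross : 0 ≤ (1 - f j) * (1 - ∏ i ∈ s, f i) :=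
      mul_nonneg (sub_nonneg.mpr hf₁.1) (sub_nonneg.mpr hprod)
    calc 1 - (a j + ∑ i ∈ s, a i) = (1 - a j) + (1 - ∑ i ∈ s, a i) - 1 := by ring
      _ ≤ f j + ∏ i ∈ s, f i - 1 := by gcongr; exacts [haf.1, ih hf₀.2 hf₁.2 haf.2]
      _ ≤ f j + ∏ i ∈ s, f i - 1 + (1 - f j) * (1 - ∏ i ∈ s, f i) :=
        le_add_of_nonneg_right hcross
      _ = f j * ∏ i ∈ s, f i := by ring

lemma one_sub_tsum_le_tprod [TopologicalSpace R] [OrderClosedTopology R] [ContinuousSub R]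
    (hf₀ : ∀ i, 0 ≤ f i) (hf₁ : ∀ i, f i ≤ 1) (haf : ∀ i, 1 - a i ≤ f i)
    (ha : Summable a) (hf : Multipliable f) : 1 - ∑' i, a i ≤ ∏' i, f i :=
  le_of_tendsto_of_tendsto' (ha.hasSum.const_sub 1) hf.hasProd fun s =>
    one_sub_sum_le_prod s (fun i _ => hf₀ i) (fun i _ => hf₁ i) (fun i _ => haf i)

end WeierstrassProduct

lemma tprod_pos_of_summable_sub_one {ι : Type*} {f : ι → ℝ} (hf : ∀ i, 0 < f i)
    (hs : Summable fun i => f i - 1) : 0 < ∏' i, f i := by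
  have hlog : Summable fun i => Real.log (f i) := by
    simpa only [add_sub_cancel] using Real.summable_log_one_add_of_summable hs
  rw [← Real.rexp_tsum_eq_tprod hf hlog]
  exact Real.exp_pos _

section CompensatedFactor

lemma one_add_mul_exp_neg_nonneg {t : ℝ} (ht : -1 ≤ t) : 0 ≤ (1 + t) * Real.exp (-t) :=
  mul_nonneg (neg_le_iff_add_nonneg'.mp ht) (Real.exp_pos _).le

lemma one_add_mul_exp_neg_le_one (t : ℝ) : (1 + t) * Real.exp (-t) ≤ 1 := by
  rw [Real.exp_neg, ← div_eq_mul_inv, div_le_one (Real.exp_pos t), add_comm]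
  exact Real.add_one_le_exp t

lemma one_sub_sq_le_one_add_mul_exp_neg {t : ℝ} (ht : -1 ≤ t) :
    1 - t ^ 2 ≤ (1 + t) * Real.exp (-t) :=
  calc 1 - t ^ 2 = (1 + t) * (1 - t) := by ring
    _ ≤ (1 + t) * Real.exp (-t) :=
      mul_le_mul_of_nonneg_left (Real.one_sub_le_exp_neg t) (by linarith)

variable {ι : Type*} {d : ι → ℝ}

lemma summable_one_add_mul_exp_neg_sub_one (hd : ∀ i, -1 ≤ d i)
    (hds : Summable fun i => d i ^ 2) :
    Summable fun i => (1 + d i) * Real.exp (-d i) - 1 := by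
  refine hds.of_norm_bounded fun i => abs_le.mpr ⟨?_, ?_⟩
  · linarith [one_sub_sq_le_one_add_mul_exp_neg (hd i)]
  · linarith [one_add_mul_exp_neg_le_one (d i), sq_nonneg (d i)]

lemma multipliable_one_add_mul_exp_neg (hd : ∀ i, -1 ≤ d i)
    (hds : Summable fun i => d i ^ 2) :
    Multipliable fun i => (1 + d i) * Real.exp (-d i) := by
  simpa only [add_sub_cancel] using
    Real.multipliable_one_add_of_summable (summable_one_add_mul_exp_neg_sub_one hd hds)

lemma tprod_one_add_mul_exp_neg_pos (hd : ∀ i, -1 < d i) (hds : Summable fun i => d i ^ 2) :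
    0 < ∏' i, (1 + d i) * Real.exp (-d i) :=
  tprod_pos_of_summable_sub_one
    (fun i => mul_pos (neg_lt_iff_pos_add'.mp (hd i)) (Real.exp_pos _))
    (summable_one_add_mul_exp_neg_sub_one (fun i => (hd i).le) hds)

lemma tprod_one_add_mul_exp_neg_le_one (hd : ∀ i, -1 ≤ d i) :
    ∏' i, (1 + d i) * Real.exp (-d i) ≤ 1 :=
  tprod_le_of_prod_le' le_rfl fun _ => Finset.prod_le_one
    (fun i _ => one_add_mul_exp_neg_nonneg (hd i)) (fun i _ => one_add_mul_exp_neg_le_one (d i))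

lemma one_sub_tsum_sq_le_tprod_one_add_mul_exp_neg (hd : ∀ i, -1 ≤ d i)
    (hds : Summable fun i => d i ^ 2) :
    1 - ∑' i, d i ^ 2 ≤ ∏' i, (1 + d i) * Real.exp (-d i) :=
  one_sub_tsum_le_tprod (fun i => one_add_mul_exp_neg_nonneg (hd i))
    (fun i => one_add_mul_exp_neg_le_one (d i))
    (fun i => one_sub_sq_le_one_add_mul_exp_neg (hd i)) hds
    (multipliable_one_add_mul_exp_neg hd hds)

end CompensatedFactor

lemma exp_sub_one_le_mul_exp (a : ℝ) : Real.exp a - 1 ≤ a * Real.exp a := by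
  have h : (1 + -a) * Real.exp a ≤ 1 := by
    simpa only [neg_neg] using one_add_mul_exp_neg_le_one (-a)
  linarith

lemma one_sub_abs_add_le_exp_mul {y p s : ℝ} (hp₀ : 0 ≤ p) (hp₁ : p ≤ 1) (hps : 1 - s ≤ p) :
    1 - (|y| + s) ≤ Real.exp y * p := by
  have hexp : Real.exp (-|y|) ≤ 1 := Real.exp_le_one_iff.mpr (neg_nonpos.mpr (abs_nonneg y))
  calc 1 - (|y| + s) = (1 - |y|) + (1 - s) - 1 := by ring
    _ ≤ Real.exp (-|y|) + p - 1 := by gcongr; exact Real.one_sub_le_exp_neg _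
    _ ≤ Real.exp (-|y|) * p := by
      linarith [mul_nonneg (sub_nonneg.mpr hexp) (sub_nonneg.mpr hp₁)]
    _ ≤ Real.exp y * p := by gcongr; exact neg_abs_le y

lemma abs_one_sub_exp_mul_le {y p s b : ℝ} (hp₀ : 0 ≤ p) (hp₁ : p ≤ 1) (hps : 1 - s ≤ p)
    (hb : |y| + s ≤ b) : |1 - Real.exp y * p| ≤ b * Real.exp b := by
  have hyb : y ≤ b := by linarith [le_abs_self y]
  have hb₀ : 0 ≤ b := by linarith [abs_nonneg y]
  rw [abs_sub_le_iff]
  constructor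
  · calc 1 - Real.exp y * p ≤ |y| + s :=
        sub_le_comm.mp (one_sub_abs_add_le_exp_mul hp₀ hp₁ hps)
      _ ≤ b := hb
      _ ≤ b * Real.exp b := le_mul_of_one_le_right hb₀ (Real.one_le_exp hb₀)
  · calc Real.exp y * p - 1 ≤ Real.exp y - 1 := by
          gcongr; exact mul_le_of_le_one_right (Real.exp_pos y).le hp₁
      _ ≤ Real.exp b - 1 := by gcongr
      _ ≤ b * Real.exp b := exp_sub_one_le_mul_exp b

theorem stochastic_exponential_estimate_general {ι : Type*} (x c : ℝ) (hc : 0 ≤ c) (d : ι → ℝ)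
    (hd : ∀ i, -1 < d i) (hds : Summable fun i => d i ^ 2) :
    Multipliable (fun i => (1 + d i) * Real.exp (-d i)) ∧
      0 < (∏' i, (1 + d i) * Real.exp (-d i)) ∧
      (∏' i, (1 + d i) * Real.exp (-d i)) ≤ 1 ∧
      |1 - Real.exp (x - c / 2) * ∏' i, (1 + d i) * Real.exp (-d i)| ≤
        (|x| + (c + ∑' i, d i ^ 2)) * Real.exp (|x| + (c + ∑' i, d i ^ 2)) := by
  have hd' : ∀ i, -1 ≤ d i := fun i => (hd i).le
  have hpos := tprod_one_add_mul_exp_neg_pos hd hds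
  have hle := tprod_one_add_mul_exp_neg_le_one hd'
  have hexponent : |x - c / 2| ≤ |x| + c := by
    rw [abs_le]
    constructor <;> linarith [neg_abs_le x, le_abs_self x]
  refine ⟨multipliable_one_add_mul_exp_neg hd' hds, hpos, hle, ?_⟩
  refine abs_one_sub_exp_mul_le hpos.le hle
    (one_sub_tsum_sq_le_tprod_one_add_mul_exp_neg hd' hds) ?_
  linarith

/-- Pathwise estimate for the Doléans-Dade stochastic exponential
`ℰ = exp(x - c/2) · ∏ᵢ (1 + dᵢ) e^{-dᵢ}`: if `c ≥ 0`, `|dᵢ| ≤ 1/16` for all `i` and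
`∑ dᵢ² < ∞`, then the infinite product converges to a limit in `(0, 1]` and, with
`Q = c + ∑ dᵢ²`, one has `|1 - ℰ| ≤ (|x| + Q) · exp (|x| + Q)`. -/
theorem stochastic_exponential_estimate (x c : ℝ) (hc : 0 ≤ c) (d : ℕ → ℝ)
    (hd : ∀ i, |d i| ≤ 1 / 16) (hds : Summable fun i => d i ^ 2) :
    Multipliable (fun i => (1 + d i) * Real.exp (-d i)) ∧
      0 < (∏' i, (1 + d i) * Real.exp (-d i)) ∧
      (∏' i, (1 + d i) * Real.exp (-d i)) ≤ 1 ∧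
      |1 - Real.exp (x - c / 2) * ∏' i, (1 + d i) * Real.exp (-d i)| ≤
        (|x| + (c + ∑' i, d i ^ 2)) * Real.exp (|x| + (c + ∑' i, d i ^ 2)) :=
  stochastic_exponential_estimate_general x c hc d
    (fun i => (by norm_num : (-1 : ℝ) < -(1 / 16)).trans_le (neg_le_of_abs_le (hd i))) hds
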